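/- arXiv:2501.06758 — 2 statements merged into one kernel-verified Lean document; each statement's English description precedes it below -/
import Mathlib

section
/- With τ* := min{k ∈ {0,…,N} : Y_k = Z_k}, the stopped Snell envelope (Y_{min(n,τ*)})_{n=0,…,N} is a martingale with respect to (𝓕_n). -/
/-!
Write `X n = Y (min n τ)`, where `τ` is the first time `Y` meets `Z`; since `Y N = Z N`, `τ` is a
genuine minimum and `τ ≤ N`. The event `{n < τ} = ⋂ k ≤ n, {Y k ≠ Z k}` lies in `ℱ n`, and
`X (n + 1) = X n + 1_{n < τ} (Y (n + 1) - Y n)`. Adaptedness and integrability follow by induction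
from this identity, and conditioning on `ℱ n` gives
`E[X (n + 1) | ℱ n] = X n + 1_{n < τ} (E[Y (n + 1) | ℱ n] - Y n)`. The last term vanishes: on
`{n < τ}` one has `Y n ≠ Z n`, so the maximum defining `Y n` is attained by the conditional
expectation.
-/

open MeasureTheory Filter Finset

/-- Square integrability of the running maximum of `|Z|` yields integrability of each `Z k`, through
`|z| ≤ 1 + z ^ 2`. -/
lemma integrable_of_sup_sq {Ω : Type*} {m : MeasurableSpace Ω} {μ : Measure Ω}
    [IsProbabilityMeasure μ] (N : ℕ) (Z : ℕ → Ω → ℝ) (hZ : ∀ n, Measurable (Z n))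
    (hZsq : Integrable (fun ω =>
      (Finset.range (N + 1)).sup'
        (Finset.nonempty_range_iff.mpr (Nat.succ_ne_zero N))
        (fun k => (Z k ω) ^ 2)) μ)
    (k : ℕ) (hk : k ≤ N) : Integrable (Z k) μ := by
  refine ((integrable_const (1 : ℝ)).add hZsq).mono' (hZ k).aestronglyMeasurable
    (ae_of_all _ fun ω => ?_)
  have h := Finset.le_sup' (fun k => (Z k ω) ^ 2) (Finset.mem_range.mpr (Nat.lt_succ_of_le hk))
  simp only [Pi.add_apply, Real.norm_eq_abs]
  refine le_trans ?_ (add_le_add_right h 1)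
  nlinarith [sq_abs (Z k ω), sq_nonneg (|Z k ω| - 1), abs_nonneg (Z k ω)]

lemma snell_integrable {Ω : Type*} {m : MeasurableSpace Ω} {μ : Measure Ω}
    (N : ℕ) (ℱ : Filtration ℕ m) (Z Y : ℕ → Ω → ℝ)
    (hZ : ∀ k ≤ N, Integrable (Z k) μ) (hYN : Y N = Z N)
    (hYrec : ∀ n < N, Y n =ᵐ[μ] fun ω => max (Z n ω) ((μ[Y (n + 1)|ℱ n]) ω))
    (n : ℕ) (hn : n ≤ N) : Integrable (Y n) μ := by
  rcases hn.eq_or_lt with rfl | hn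
  · rw [hYN]
    exact hZ _ le_rfl
  · exact ((hZ n hn.le).sup integrable_condExp).congr (hYrec n hn).symm

/-- The increments of a stopped process are those of the process on `{n < τ}`, and zero elsewhere. -/
lemma stopped_succ {Ω : Type*} (Y : ℕ → Ω → ℝ) (τ : Ω → ℕ) (n : ℕ) :
    (fun ω => Y (min (n + 1) (τ ω)) ω) =
      (fun ω => Y (min n (τ ω)) ω) + {ω | n < τ ω}.indicator (Y (n + 1) - Y n) := by
  ext ω
  by_cases h : n < τ ω
  · simp [h, min_eq_left h.le]
  · have h' : τ ω ≤ n := not_lt.mp h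
    simp [h, min_eq_right h', min_eq_right (h'.trans n.le_succ)]

/-- With `τ* := min {k ∈ {0,…,N} : Y_k = Z_k}`, the stopped Snell envelope
`(Y_{min(n,τ*)})_{n=0,…,N}` is a martingale with respect to `(𝓕_n)`. -/
theorem snell_envelope_stopped_martingale
    {Ω : Type*} {m : MeasurableSpace Ω} {μ : Measure Ω} [IsProbabilityMeasure μ]
    (N : ℕ) (ℱ : Filtration ℕ m)
    (Z Y : ℕ → Ω → ℝ)
    (hZadapted : Adapted ℱ Z)
    (hYadapted : Adapted ℱ Y)
    (hZsq : Integrable (fun ω =>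
      (Finset.range (N + 1)).sup'
        (Finset.nonempty_range_iff.mpr (Nat.succ_ne_zero N))
        (fun k => (Z k ω) ^ 2)) μ)
    (hYN : Y N = Z N)
    (hYrec : ∀ n < N, Y n =ᵐ[μ] fun ω => max (Z n ω) ((μ[Y (n + 1)|ℱ n]) ω))
    (τStar : Ω → ℕ)
    (hτStar : ∀ ω, τStar ω = sInf {k | Y k ω = Z k ω}) :
    -- the stopped process is adapted, integrable on {0,…,N}, and a martingale
    Adapted ℱ (fun n ω => Y (min n (τStar ω)) ω) ∧
    (∀ n ≤ N, Integrable (fun ω => Y (min n (τStar ω)) ω) μ) ∧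
    (∀ n < N,
      (μ[fun ω => Y (min (n + 1) (τStar ω)) ω|ℱ n]) =ᵐ[μ]
        fun ω => Y (min n (τStar ω)) ω) := by
  have hZint := integrable_of_sup_sq N Z (fun n => (hZadapted n).mono (ℱ.le n) le_rfl) hZsq
  have hYint := snell_integrable N ℱ Z Y hZint hYN hYrec
  -- `N` belongs to the set of meeting times, so the infimum is not the junk value of `sInf ∅`.
  have hlt : ∀ n ω, n < τStar ω ↔ ∀ k ≤ n, Y k ω ≠ Z k ω := by
    intro n ω
    have hmem : Y (τStar ω) ω = Z (τStar ω) ω := by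
      have h := Nat.sInf_mem (s := {k | Y k ω = Z k ω}) ⟨N, congrFun hYN ω⟩
      rw [← hτStar ω] at h
      exact h
    refine ⟨fun h k hk hkeq => ?_, fun h => ?_⟩
    · have h1 : τStar ω ≤ k := by
        rw [hτStar ω]
        exact Nat.sInf_le hkeq
      omega
    · by_contra hcon
      exact h _ (not_lt.mp hcon) hmem
  have hA : ∀ n, MeasurableSet[ℱ n] {ω | n < τStar ω} := by
    intro n
    have hset : {ω | n < τStar ω} = ⋂ k, ⋂ (_ : k ≤ n), {ω | Y k ω = Z k ω}ᶜ := by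
      ext ω
      simp [hlt n ω]
    rw [hset]
    refine MeasurableSet.iInter fun k => MeasurableSet.iInter fun hk => MeasurableSet.compl ?_
    exact ℱ.mono hk _ (measurableSet_eq_fun (hYadapted k) (hZadapted k))
  have hadapt : Adapted ℱ (fun n ω => Y (min n (τStar ω)) ω) := by
    intro n
    induction n with
    | zero => simpa using hYadapted 0
    | succ n ih =>
      simp only [stopped_succ Y τStar n]
      exact (ih.mono (ℱ.mono n.le_succ) le_rfl).add
        (((hYadapted (n + 1)).sub ((hYadapted n).mono (ℱ.mono n.le_succ) le_rfl)).indicator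
          (ℱ.mono n.le_succ _ (hA n)))
  have hint : ∀ n ≤ N, Integrable (fun ω => Y (min n (τStar ω)) ω) μ := by
    intro n
    induction n with
    | zero => simpa using hYint 0
    | succ n ih =>
      intro hn
      rw [stopped_succ Y τStar n]
      exact (ih (by omega)).add
        (((hYint _ hn).sub (hYint n (by omega))).indicator (ℱ.le n _ (hA n)))
  refine ⟨hadapt, hint, fun n hn => ?_⟩
  have hD : Integrable (Y (n + 1) - Y n) μ := (hYint _ hn).sub (hYint n hn.le)
  rw [stopped_succ Y τStar n]
  have h1 := condExp_add (hint n hn.le) (hD.indicator (ℱ.le n _ (hA n))) (ℱ n)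
  have h2 := condExp_indicator hD (hA n)
  have h3 := condExp_sub (hYint _ hn) (hYint n hn.le) (ℱ n)
  rw [condExp_of_stronglyMeasurable (ℱ.le n) (hadapt n).stronglyMeasurable (hint n hn.le)] at h1
  rw [condExp_of_stronglyMeasurable (ℱ.le n) (hYadapted n).stronglyMeasurable
    (hYint n hn.le)] at h3
  filter_upwards [h1, h2, h3, hYrec n hn] with ω e1 e2 e3 e4
  rw [e1, Pi.add_apply, e2]
  by_cases h : n < τStar ω
  · have hne := (hlt n ω).mp h n le_rfl
    have hY : Y n ω = (μ[Y (n + 1)|ℱ n]) ω := by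
      rcases max_choice (Z n ω) ((μ[Y (n + 1)|ℱ n]) ω) with h' | h'
      · exact absurd (e4.trans h') hne
      · exact e4.trans h'
    rw [Set.indicator_of_mem (by exact h), e3, Pi.sub_apply, ← hY, sub_self, add_zero]
  · rw [Set.indicator_of_notMem (by exact h), add_zero]
end

section
/- Let (Y_n) be the Snell envelope of (Z_n) and let M* be the martingale part of its Doob decomposition, i.e., M*_0 = 0 and M*_n = Σ_{k=1}^n (Y_k − E[Y_k | 𝓕_{k−1}]). Then almost surely max_{0≤n≤N} (Z_n − M*_n) ≤ Y_0. -/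
/-!
The backward recursion gives, almost surely, `Z_n ≤ Y_n` and `E[Y_{n+1} | ℱ_n] ≤ Y_n` for all
relevant `n` at once. Since `M*_{n+1} - M*_n = Y_{n+1} - E[Y_{n+1} | ℱ_n]`, the second inequality
says that `Y_n - M*_n` is pathwise nonincreasing, hence at most `Y_0`; the first then bounds
`Z_n - M*_n` by `Y_0`.
-/

open MeasureTheory Filter Finset

/-- With `M*` the martingale part of the Doob decomposition of the Snell envelope `Y`,
i.e. `M*_0 = 0` and `M*_n = Σ_{k=1}^n (Y_k − E[Y_k | 𝓕_{k−1}])`, almost surely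
`max_{0≤n≤N} (Z_n − M*_n) ≤ Y_0`. -/
theorem doob_martingale_pathwise_bound
    {Ω : Type*} {m : MeasurableSpace Ω} {μ : Measure Ω} [IsProbabilityMeasure μ]
    (N : ℕ) (ℱ : Filtration ℕ m)
    (Z Y : ℕ → Ω → ℝ)
    (hZadapted : Adapted ℱ Z)
    (hYadapted : Adapted ℱ Y)
    (hZsq : Integrable (fun ω =>
      (Finset.range (N + 1)).sup'
        (Finset.nonempty_range_iff.mpr (Nat.succ_ne_zero N))
        (fun k => (Z k ω) ^ 2)) μ)
    (hYN : Y N = Z N)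
    (hYrec : ∀ n < N, Y n =ᵐ[μ] fun ω => max (Z n ω) ((μ[Y (n + 1)|ℱ n]) ω))
    (MStar : ℕ → Ω → ℝ)
    (hMStar : ∀ n ω, MStar n ω =
      ∑ k ∈ Finset.Icc 1 n, (Y k ω - (μ[Y k|ℱ (k - 1)]) ω)) :
    ∀ᵐ ω ∂μ,
      (Finset.range (N + 1)).sup'
        (Finset.nonempty_range_iff.mpr (Nat.succ_ne_zero N))
        (fun n => Z n ω - MStar n ω) ≤ Y 0 ω := by
  have hrec : ∀ᵐ ω ∂μ, ∀ n, n < N → Y n ω = max (Z n ω) ((μ[Y (n + 1)|ℱ n]) ω) := by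
    rw [ae_all_iff]
    intro n
    by_cases hn : n < N
    · filter_upwards [hYrec n hn] with ω hω _ using hω
    · exact ae_of_all _ fun ω h => absurd h hn
  filter_upwards [hrec] with ω hω
  have key : ∀ n, n ≤ N → Y n ω - MStar n ω ≤ Y 0 ω := by
    intro n
    induction n with
    | zero => intro _; simp [hMStar]
    | succ n ih =>
      intro hn
      have hprev := ih (by omega)
      have hsuper : (μ[Y (n + 1)|ℱ n]) ω ≤ Y n ω := by
        rw [hω n (by omega)]
        exact le_max_right _ _
      have hstep : MStar (n + 1) ω
          = MStar n ω + (Y (n + 1) ω - (μ[Y (n + 1)|ℱ n]) ω) := by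
        rw [hMStar, hMStar, Finset.sum_Icc_succ_top (by omega), Nat.add_sub_cancel]
      linarith
  refine Finset.sup'_le _ _ fun n hn => ?_
  have hnN : n ≤ N := by simpa [Nat.lt_succ_iff] using hn
  have hZY : Z n ω ≤ Y n ω := by
    rcases hnN.lt_or_eq with h | rfl
    · rw [hω n h]
      exact le_max_left _ _
    · rw [hYN]
  have hbound := key n hnN
  linarith
end
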